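/- arXiv:1803.00377 — 2 statements merged into one kernel-verified Lean document; each statement's English description precedes it below -/
import Mathlib

section
/- There exists a compact continuous linear operator T from L²(D, dA) to L²(D, dA) such that, for every f ∈ L²(D, dA) and almost every z ∈ D, the integral ∫_D f(w)/(z−w) dA(w) converges absolutely and Tf(z) = ∫_D f(w)/(z−w) dA(w). In other words, the Cauchy transform of the unit disc equipped with planar Lebesgue measure is a compact operator on L²(dA). -/
open MeasureTheory Metric Complex

/-- `dA` : the planar Lebesgue measure restricted to the open unit disc `D`. -/
noncomputable def dA : Measure ℂ := (volume : Measure ℂ).restrict (ball (0:ℂ) 1)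

open scoped ENNReal NNReal

lemma cs_aux {α : Type*} [MeasurableSpace α] (μ : Measure α) (k h : α → ℝ≥0∞)
    (hk : AEMeasurable k μ) (hh : AEMeasurable h μ) :
    (∫⁻ w, k w * h w ∂μ) ^ 2 ≤ (∫⁻ w, k w ∂μ) * ∫⁻ w, k w * h w ^ 2 ∂μ := by
  have h1 := ENNReal.lintegral_mul_le_Lp_mul_Lq μ (p := 2) (q := 2)
    (by constructor <;> norm_num) (f := fun w => k w ^ (1/2 : ℝ))
    (g := fun w => k w ^ (1/2 : ℝ) * h w) (hk.pow_const _) ((hk.pow_const _).mul hh)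
  have e0 : ∀ x : ℝ≥0∞, x ^ (1/2 : ℝ) * x ^ (1/2 : ℝ) = x := by
    intro x
    rw [← ENNReal.rpow_add_of_nonneg _ _ (by norm_num) (by norm_num)]; norm_num
  have e1 : ∀ x : ℝ≥0∞, (x ^ (1/2 : ℝ)) ^ (2:ℝ) = x := by
    intro x; rw [← ENNReal.rpow_mul]; norm_num
  have e2 : ∀ x : ℝ≥0∞, (x ^ (1/2 : ℝ)) ^ 2 = x := by
    intro x; rw [sq, e0]
  simp only [Pi.mul_apply, ← mul_assoc, e0, e1, ENNReal.mul_rpow_of_nonneg _ _ (zero_le_two)] at h1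
  calc _ ≤ ((∫⁻ a, k a ∂μ) ^ (1/2 : ℝ) * (∫⁻ a, k a * h a ^ (2:ℝ) ∂μ) ^ (1/2 : ℝ)) ^ 2 := by gcongr
    _ = _ := by rw [mul_pow, e2, e2]; simp

lemma schur_aux {α : Type*} [MeasurableSpace α] (μ : Measure α) [SFinite μ] (k : α → α → ℝ≥0∞)
    (hk : Measurable (Function.uncurry k)) (h : α → ℝ≥0∞) (hh : AEMeasurable h μ) (C : ℝ≥0∞)
    (h1 : ∀ᵐ z ∂μ, ∫⁻ w, k z w ∂μ ≤ C) (h2 : ∀ᵐ w ∂μ, ∫⁻ z, k z w ∂μ ≤ C) :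
    ∫⁻ z, (∫⁻ w, k z w * h w ∂μ) ^ 2 ∂μ ≤ C ^ 2 * ∫⁻ w, h w ^ 2 ∂μ := by
  have hm : AEMeasurable (Function.uncurry fun z w => k z w * h w ^ 2) (μ.prod μ) :=
    hk.aemeasurable.mul ((hh.comp_snd (μ := μ)).pow_const 2)
  calc _ ≤ ∫⁻ z, C * ∫⁻ w, k z w * h w ^ 2 ∂μ ∂μ := by
        refine lintegral_mono_ae ?_
        filter_upwards [h1] with z hz
        refine (cs_aux μ (k z) h (hk.comp measurable_prodMk_left).aemeasurable hh).trans ?_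
        gcongr
    _ = C * ∫⁻ z, ∫⁻ w, k z w * h w ^ 2 ∂μ ∂μ := by
        rw [lintegral_const_mul'']
        exact hm.lintegral_prod_right'
    _ = C * ∫⁻ w, ∫⁻ z, k z w * h w ^ 2 ∂μ ∂μ := by
        rw [lintegral_lintegral_swap hm]
    _ = C * ∫⁻ w, (∫⁻ z, k z w ∂μ) * h w ^ 2 ∂μ := by
        congr 1
        refine lintegral_congr fun w => ?_
        rw [lintegral_mul_const]
        exact hk.comp measurable_prodMk_right
    _ ≤ C * ∫⁻ w, C * h w ^ 2 ∂μ := by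
        gcongr 1
        refine lintegral_mono_ae ?_
        filter_upwards [h2] with w hw
        gcongr
    _ = _ := by
        rw [lintegral_const_mul'' _ (hh.pow_const 2), ← mul_assoc, sq]

lemma eLp_two {α : Type*} [MeasurableSpace α] (μ : Measure α) (f : α → ℂ) :
    eLpNorm f 2 μ ^ 2 = ∫⁻ x, ‖f x‖ₑ ^ 2 ∂μ := by
  have := eLpNorm_nnreal_pow_eq_lintegral (f := f) (μ := μ) (p := 2) (by norm_num)
  simpa using this

lemma schur {α : Type*} [MeasurableSpace α] (μ : Measure α) [SFinite μ] (K : α → α → ℂ)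
    (hK : Measurable (Function.uncurry K)) (C : ℝ≥0)
    (h1 : ∀ᵐ z ∂μ, ∫⁻ w, ‖K z w‖ₑ ∂μ ≤ C) (h2 : ∀ᵐ w ∂μ, ∫⁻ z, ‖K z w‖ₑ ∂μ ≤ C) :
    ∃ T : Lp ℂ 2 μ →L[ℂ] Lp ℂ 2 μ, ‖T‖ ≤ C ∧ ∀ f : Lp ℂ 2 μ, ∀ᵐ z ∂μ,
      Integrable (fun w => K z w * f w) μ ∧ T f z = ∫ w, K z w * f w ∂μ := by
  have key : ∀ f : Lp ℂ 2 μ,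
      ∫⁻ z, (∫⁻ w, ‖K z w‖ₑ * ‖f w‖ₑ ∂μ) ^ 2 ∂μ ≤ (C * eLpNorm f 2 μ) ^ 2 := by
    intro f
    rw [mul_pow, eLp_two]
    exact schur_aux μ (fun z w => ‖K z w‖ₑ) hK.enorm _
      (Lp.aestronglyMeasurable f).enorm C h1 h2
  have hmeas : ∀ f : Lp ℂ 2 μ, AEStronglyMeasurable (Function.uncurry fun z w => K z w * f w)
      (μ.prod μ) := fun f => hK.aestronglyMeasurable.mul (Lp.aestronglyMeasurable f).comp_snd
  have hint : ∀ f : Lp ℂ 2 μ, ∀ᵐ z ∂μ, Integrable (fun w => K z w * f w) μ := by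
    intro f
    have hlt : ∫⁻ z, (∫⁻ w, ‖K z w‖ₑ * ‖f w‖ₑ ∂μ) ^ 2 ∂μ ≠ ∞ := by
      refine ((key f).trans_lt ?_).ne
      exact ENNReal.pow_lt_top (ENNReal.mul_lt_top ENNReal.coe_lt_top (Lp.eLpNorm_lt_top f))
    have hm : AEMeasurable (fun z => (∫⁻ w, ‖K z w‖ₑ * ‖f w‖ₑ ∂μ) ^ 2) μ := by
      have := (hmeas f).enorm.lintegral_prod_right'
      simp only [Function.uncurry, enorm_mul] at this
      exact this.pow_const 2
    filter_upwards [ae_lt_top' hm hlt] with z hz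
    refine ⟨(hK.comp measurable_prodMk_left).aestronglyMeasurable.mul
      (Lp.aestronglyMeasurable f), ?_⟩
    rw [hasFiniteIntegral_iff_enorm]
    simp only [enorm_mul]
    exact (ENNReal.pow_lt_top_iff.1 hz).resolve_right (by norm_num)
  have hbd : ∀ f : Lp ℂ 2 μ, eLpNorm (fun z => ∫ w, K z w * f w ∂μ) 2 μ ≤ C * eLpNorm f 2 μ := by
    intro f
    refine (ENNReal.pow_le_pow_left_iff two_ne_zero).1 ?_
    rw [eLp_two]
    refine le_trans (lintegral_mono fun z => ?_) (key f)
    gcongr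
    refine (enorm_integral_le_lintegral_enorm _).trans ?_
    simp only [enorm_mul]; rfl
  have hmem : ∀ f : Lp ℂ 2 μ, MemLp (fun z => ∫ w, K z w * f w ∂μ) 2 μ := fun f =>
    ⟨(hmeas f).integral_prod_right',
      (hbd f).trans_lt (ENNReal.mul_lt_top ENNReal.coe_lt_top (Lp.eLpNorm_lt_top f))⟩
  let L : Lp ℂ 2 μ →ₗ[ℂ] Lp ℂ 2 μ :=
    { toFun := fun f => (hmem f).toLp _
      map_add' := by
        intro f g
        rw [← MemLp.toLp_add]
        refine MemLp.toLp_congr _ _ ?_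
        filter_upwards [hint f, hint g] with z hf hg
        simp only [Pi.add_apply]
        rw [← integral_add hf hg]
        refine integral_congr_ae ?_
        filter_upwards [Lp.coeFn_add f g] with w hw
        rw [hw]; simp [mul_add]
      map_smul' := by
        intro c f
        rw [RingHom.id_apply, ← MemLp.toLp_const_smul]
        refine MemLp.toLp_congr _ _ ?_
        filter_upwards with z
        simp only [Pi.smul_apply]
        rw [← integral_smul]
        refine integral_congr_ae ?_
        filter_upwards [Lp.coeFn_smul c f] with w hw
        rw [hw]; simp; ring }
  refine ⟨L.mkContinuous C ?_, L.mkContinuous_norm_le C.2 _, ?_⟩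
  · intro f
    change ‖(hmem f).toLp _‖ ≤ _
    rw [Lp.norm_toLp, Lp.norm_def]
    have := ENNReal.toReal_mono (ENNReal.mul_lt_top ENNReal.coe_lt_top (Lp.eLpNorm_lt_top f)).ne (hbd f)
    simpa using this
  · intro f
    filter_upwards [hint f, (hmem f).coeFn_toLp] with z hz hz2
    exact ⟨hz, hz2⟩

lemma inv_integrable : Integrable ((ball (0:ℂ) 2).indicator (fun u => u⁻¹)) := by
  refine ⟨(measurable_inv.indicator measurableSet_ball).aestronglyMeasurable, ?_⟩
  rw [hasFiniteIntegral_iff_enorm, ← Complex.lintegral_comp_polarCoord_symm]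
  calc _ ≤ ∫⁻ p in polarCoord.target, (Set.Ioo (0:ℝ) 2 ×ˢ Set.Ioo (-Real.pi) Real.pi).indicator 1 p := by
        refine setLIntegral_mono' polarCoord.open_target.measurableSet ?_
        rintro ⟨r, t⟩ ⟨hr, ht⟩
        have hr : 0 < r := hr
        have hn : ‖Complex.polarCoord.symm (r, t)‖ = r := by
          rw [Complex.norm_polarCoord_symm]; exact abs_of_pos hr
        by_cases h : r < 2
        · rw [Set.indicator_of_mem (by rw [mem_ball_zero_iff, hn]; exact h),
            Set.indicator_of_mem (by exact ⟨⟨hr, h⟩, ht⟩)]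
          rw [← ofReal_norm, norm_inv, hn, smul_eq_mul, ← ENNReal.ofReal_mul hr.le,
            mul_inv_cancel₀ hr.ne']
          simp
        · rw [Set.indicator_of_notMem (by rw [mem_ball_zero_iff, hn]; exact h)]
          simp
    _ ≤ ∫⁻ p, (Set.Ioo (0:ℝ) 2 ×ˢ Set.Ioo (-Real.pi) Real.pi).indicator 1 p :=
        setLIntegral_le_lintegral _ _
    _ < ∞ := by
        rw [lintegral_indicator_one (measurableSet_Ioo.prod measurableSet_Ioo),
          Measure.volume_eq_prod, Measure.prod_prod]
        simp [ENNReal.mul_lt_top_iff]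

lemma nearest (δ : ℝ) (hδ : 0 < δ) : ∃ s : SimpleFunc ℂ ℂ, ∀ z ∈ ball (0:ℂ) 1, dist (s z) z < δ := by
  let e := TopologicalSpace.denseSeq ℂ
  obtain ⟨t, ht⟩ := (isCompact_closedBall (0:ℂ) 1).elim_finite_subcover (fun n => ball (e n) δ)
    (fun _ => isOpen_ball) (by
      intro z _
      obtain ⟨y, hn, ⟨n, rfl⟩⟩ :=
        Metric.dense_iff.1 (TopologicalSpace.denseRange_denseSeq ℂ) z δ hδ
      exact Set.mem_iUnion.2 ⟨n, by rw [mem_ball, dist_comm]; exact hn⟩)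
  refine ⟨SimpleFunc.nearestPt e (t.sup id), fun z hz => ?_⟩
  obtain ⟨n, hn, hz⟩ := Set.mem_iUnion₂.1 (ht (ball_subset_closedBall hz))
  have := SimpleFunc.edist_nearestPt_le e z (k := n) (N := t.sup id) (Finset.le_sup (f := id) hn)
  rw [edist_dist, edist_dist, ENNReal.ofReal_le_ofReal_iff dist_nonneg] at this
  rw [mem_ball, dist_comm] at hz
  exact this.trans_lt hz

lemma finrank_compact {E : Type*} [NormedAddCommGroup E] [NormedSpace ℂ E] (F : E →L[ℂ] E)
    (V : Submodule ℂ E) [FiniteDimensional ℂ V] (h : ∀ f, F f ∈ V) : IsCompactOperator F := by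
  have : LocallyCompactSpace V := .of_finiteDimensional_of_complete ℂ V
  exact (isCompactOperator_id (E := V)).clm_comp V.subtypeL |>.comp_clm (F.codRestrict V h)

instance dA_finite : IsFiniteMeasure dA :=
  ⟨by rw [dA, Measure.restrict_apply_univ]; exact measure_ball_lt_top⟩

lemma dA_mem : ∀ᵐ z ∂dA, z ∈ ball (0:ℂ) 1 := ae_restrict_mem measurableSet_ball

lemma dA_left (h : ℂ → ℝ≥0∞) (z : ℂ) : ∫⁻ w, h (z - w) ∂dA ≤ ∫⁻ u, h u :=
  (setLIntegral_le_lintegral _ _).trans (lintegral_sub_left_eq_self h z).le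

lemma dA_right (h : ℂ → ℝ≥0∞) (w : ℂ) : ∫⁻ z, h (z - w) ∂dA ≤ ∫⁻ u, h u :=
  (setLIntegral_le_lintegral _ _).trans (lintegral_sub_right_eq_self h w).le

lemma dA_sum (t : Finset ℂ) (v : ℂ → Lp ℂ 2 dA) :
    ⇑(∑ a ∈ t, v a) =ᵐ[dA] ∑ a ∈ t, ⇑(v a) := by
  induction t using Finset.induction_on with
  | empty => simpa using Lp.coeFn_zero ℂ 2 dA
  | insert a t ha ih =>
    rw [Finset.sum_insert ha, Finset.sum_insert ha]
    exact (Lp.coeFn_add _ _).trans (Filter.EventuallyEq.rfl.add ih)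

lemma dA_approx (g : ℂ → ℂ) (hgm : Measurable g) (hg : Integrable g)
    (T : Lp ℂ 2 dA →L[ℂ] Lp ℂ 2 dA)
    (hT : ∀ f : Lp ℂ 2 dA, ∀ᵐ z ∂dA,
      Integrable (fun w => g (z - w) * f w) dA ∧ T f z = ∫ w, g (z - w) * f w ∂dA)
    (η : ℝ≥0) (hη : 0 < η) :
    ∃ F : Lp ℂ 2 dA →L[ℂ] Lp ℂ 2 dA, IsCompactOperator F ∧
      ‖T - F‖ ≤ η + η * (dA Set.univ).toNNReal := by
  obtain ⟨φ, hφs, hφ, hφc, -⟩ := hg.exists_hasCompactSupport_lintegral_sub_le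
    (ε := (η : ℝ≥0∞)) (by simpa using hη.ne')
  have hu := hφs.uniformContinuous_of_continuous hφc
  obtain ⟨δ, hδ, hu⟩ := Metric.uniformContinuous_iff.1 hu η hη
  obtain ⟨s, hs⟩ := nearest δ hδ
  have hb : ∀ z ∈ ball (0:ℂ) 1, ∀ w, ‖g (z - w) - φ (s z - w)‖ₑ ≤
      ‖g (z - w) - φ (z - w)‖ₑ + η := by
    intro z hz w
    have h1 : g (z - w) - φ (s z - w) =
      (g (z - w) - φ (z - w)) + (φ (z - w) - φ (s z - w)) := by ring
    rw [h1]
    refine (enorm_add_le _ _).trans ?_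
    gcongr
    have h2 : dist (φ (z - w)) (φ (s z - w)) < η := by
      apply hu
      rw [dist_sub_right, dist_comm]
      exact hs z hz
    rw [dist_eq_norm] at h2
    rw [← ofReal_norm, ← ENNReal.ofReal_coe_nnreal]
    exact ENNReal.ofReal_le_ofReal h2.le
  have hC : ((η + η * (dA Set.univ).toNNReal : ℝ≥0) : ℝ≥0∞) = η + η * dA Set.univ := by
    push_cast
    rw [ENNReal.coe_toNNReal (measure_ne_top _ _)]
  obtain ⟨D, hD, hD2⟩ := schur dA (fun z w => g (z - w) - φ (s z - w)) (by
      apply Measurable.sub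
      · exact hgm.comp (measurable_fst.sub measurable_snd)
      · exact hφc.measurable.comp ((s.measurable.comp measurable_fst).sub measurable_snd))
    (η + η * (dA Set.univ).toNNReal) (by
      rw [hC]
      filter_upwards [dA_mem] with z hz
      refine (lintegral_mono (hb z hz)).trans ?_
      rw [lintegral_add_right _ measurable_const, lintegral_const]
      gcongr
      exact (dA_left (fun u => ‖g u - φ u‖ₑ) z).trans hφ) (by
      rw [hC]
      filter_upwards with w
      refine (lintegral_mono_ae (g := fun z => ‖g (z - w) - φ (z - w)‖ₑ + η) ?_).trans ?_
      · filter_upwards [dA_mem] with z hz using hb z hz w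
      rw [lintegral_add_right _ measurable_const, lintegral_const]
      gcongr
      exact (dA_right (fun u => ‖g u - φ u‖ₑ) w).trans hφ)
  refine ⟨T - D, ?_, by simpa using hD⟩
  have hmem : ∀ a : ℂ, MemLp ((s ⁻¹' {a}).indicator (fun _ => (1:ℂ))) 2 dA := fun a =>
    (memLp_const (1:ℂ)).indicator (s.measurableSet_preimage {a})
  let e : ℂ → Lp ℂ 2 dA := fun a => (hmem a).toLp _
  have hfd : FiniteDimensional ℂ (Submodule.span ℂ (e '' s.range)) :=
    FiniteDimensional.span_of_finite ℂ (s.range.finite_toSet.image e)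
  refine finrank_compact _ (Submodule.span ℂ (e '' s.range)) fun f => ?_
  have : (T - D) f = ∑ a ∈ s.range, (∫ w, φ (a - w) * f w ∂dA) • e a := by
    apply Lp.ext
    have hsum := dA_sum s.range (fun a => (∫ w, φ (a - w) * f w ∂dA) • e a)
    have hsm : ∀ᵐ z ∂dA, ∀ a ∈ s.range, ((∫ w, φ (a - w) * f w ∂dA) • e a : Lp ℂ 2 dA) z =
        (∫ w, φ (a - w) * f w ∂dA) * (s ⁻¹' {a}).indicator (fun _ => (1:ℂ)) z := by
      rw [Finset.eventually_all]
      intro a _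
      filter_upwards [Lp.coeFn_smul (∫ w, φ (a - w) * f w ∂dA) (e a), (hmem a).coeFn_toLp]
        with z h1 h2
      rw [h1, Pi.smul_apply, smul_eq_mul, h2]
    rw [ContinuousLinearMap.sub_apply]
    filter_upwards [hT f, hD2 f, Lp.coeFn_sub (T f) (D f), hsum, hsm] with z h1 h2 h3 h4 h5
    rw [h3, Pi.sub_apply, h1.2, h2.2, ← integral_sub h1.1 h2.1, h4, Finset.sum_apply,
      Finset.sum_congr rfl h5, Finset.sum_eq_single (s z)]
    · simp only [Set.mem_preimage, Set.mem_singleton_iff, Set.indicator_of_mem, mul_one]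
      refine integral_congr_ae (Filter.Eventually.of_forall fun w => ?_)
      simp only; ring
    · intro b _ hbz
      rw [Set.indicator_of_notMem, mul_zero]
      exact fun h => hbz h.symm
    · intro h
      exact absurd (s.mem_range_self z) h
  rw [this]
  exact Submodule.sum_mem _ fun a ha => Submodule.smul_mem _ _
    (Submodule.subset_span ⟨a, ha, rfl⟩)

/-- The Cauchy transform of the unit disc with planar Lebesgue measure is a compact
operator on `L²(dA)`: there is a compact continuous linear operator `T` on `L²(D, dA)`
such that for every `f ∈ L²(D, dA)` and a.e. `z`, the integral `∫_D f(w)/(z-w) dA(w)`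
converges absolutely and `T f z` equals it. -/
theorem stmt3 :
    ∃ T : Lp ℂ 2 dA →L[ℂ] Lp ℂ 2 dA, IsCompactOperator (⇑T) ∧
      ∀ f : Lp ℂ 2 dA, ∀ᵐ z ∂dA,
        Integrable (fun w => f w / (z - w)) dA ∧
        T f z = ∫ w, f w / (z - w) ∂dA := by
  set g : ℂ → ℂ := (ball (0:ℂ) 2).indicator (fun u => u⁻¹) with hgdef
  have hgm : Measurable g := measurable_inv.indicator measurableSet_ball
  have hg : Integrable g := inv_integrable
  have hgC : ((∫⁻ u, ‖g u‖ₑ).toNNReal : ℝ≥0∞) = ∫⁻ u, ‖g u‖ₑ :=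
    ENNReal.coe_toNNReal (hasFiniteIntegral_iff_enorm.1 hg.2).ne
  obtain ⟨T, -, hT⟩ := schur dA (fun z w => g (z - w))
    (hgm.comp (measurable_fst.sub measurable_snd)) (∫⁻ u, ‖g u‖ₑ).toNNReal
    (by rw [hgC]; exact Filter.Eventually.of_forall fun z => dA_left (fun u => ‖g u‖ₑ) z)
    (by rw [hgC]; exact Filter.Eventually.of_forall fun w => dA_right (fun u => ‖g u‖ₑ) w)
  refine ⟨T, ?_, ?_⟩
  · have hcl : T ∈ closure {F : Lp ℂ 2 dA →L[ℂ] Lp ℂ 2 dA | IsCompactOperator F} := by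
      rw [Metric.mem_closure_iff]
      intro ε hε
      set V := (dA Set.univ).toNNReal
      obtain ⟨F, hF, hF2⟩ := dA_approx g hgm hg T hT (ε.toNNReal / (2 * (1 + V)))
        (by have := Real.toNNReal_pos.2 hε; positivity)
      refine ⟨F, hF, ?_⟩
      rw [dist_eq_norm]
      refine hF2.trans_lt ?_
      push_cast
      rw [Real.coe_toNNReal _ hε.le]
      have hV : (0:ℝ) ≤ V := V.2
      have : ε / (2 * (1 + (V:ℝ))) + ε / (2 * (1 + (V:ℝ))) * V = ε / 2 := by
        field_simp
      refine lt_of_eq_of_lt this ?_; linarith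
    exact isClosed_setOfPred_isCompactOperator.closure_subset hcl
  · intro f
    filter_upwards [hT f, dA_mem] with z hz hz1
    have hae : (fun w => g (z - w) * f w) =ᵐ[dA] fun w => f w / (z - w) := by
      filter_upwards [dA_mem] with w hw
      have : z - w ∈ ball (0:ℂ) 2 := by
        rw [mem_ball_zero_iff] at *
        calc ‖z - w‖ ≤ ‖z‖ + ‖w‖ := norm_sub_le _ _
          _ < 2 := by linarith
      rw [hgdef, Set.indicator_of_mem this, div_eq_mul_inv, mul_comm]
    exact ⟨hz.1.congr hae, hz.2.trans (integral_congr_ae hae)⟩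
end

section
/- There is no compact continuous linear operator T : L²([0,1]) → L²([0,1]) with the property that for every f ∈ L²([0,1]) and almost every x ∈ [0,1], Tf(x) = lim_{ε→0⁺} ∫_{y ∈ [0,1], |x−y| > ε} f(y)/(x−y) dy. In other words, the Cauchy transform of the measure μ = H¹ restricted to the segment [0,1]×{0} (equivalently, the Hilbert transform restricted to [0,1]) is not a compact operator from L²(μ) to L²(μ). -/
open MeasureTheory

/-- `μ01` : the 1-dimensional Lebesgue measure restricted to `[0,1]`. -/
noncomputable def μ01 : Measure ℝ := (volume : Measure ℝ).restrict (Set.Icc (0:ℝ) 1)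

instance μ01_finite : IsFiniteMeasure μ01 := by
  unfold μ01; infer_instance

lemma μ01_real_Ioo {a b : ℝ} (ha : 0 ≤ a) (hab : a ≤ b) (hb : b ≤ 1) :
    μ01.real (Set.Ioo a b) = b - a := by
  unfold μ01
  rw [measureReal_restrict_apply measurableSet_Ioo, Set.inter_eq_left.2, Real.volume_real_Ioo_of_le hab]
  intro x hx
  exact ⟨ha.trans hx.1.le, hx.2.le.trans hb⟩

/-- normalised indicator of `(a,b)` -/
noncomputable def bump (a b : ℝ) : Lp ℝ 2 μ01 :=
  indicatorConstLp 2 (measurableSet_Ioo (a := a) (b := b)) (measure_ne_top μ01 _) (√(b - a))⁻¹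

lemma norm_bump {a b : ℝ} (ha : 0 ≤ a) (hab : a < b) (hb : b ≤ 1) : ‖bump a b‖ = 1 := by
  unfold bump
  have h : 0 < √(b - a) := Real.sqrt_pos.2 (by linarith)
  rw [norm_indicatorConstLp (by simp) (by simp), μ01_real_Ioo ha hab.le hb]
  simp only [ENNReal.toReal_ofNat, ← Real.sqrt_eq_rpow, norm_inv, Real.norm_eq_abs, abs_of_pos h]
  field_simp

lemma inner_bump_disjoint {a b c d : ℝ} (h : b ≤ c) : inner ℝ (bump a b) (bump c d) = 0 := by
  unfold bump
  rw [L2.inner_indicatorConstLp_indicatorConstLp]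
  have : Set.Ioo a b ∩ Set.Ioo c d = ∅ := by
    ext x
    simp only [Set.mem_inter_iff, Set.mem_Ioo, Set.mem_empty_iff_false, iff_false]
    rintro ⟨⟨_, h1⟩, h2, _⟩
    linarith
  simp [this]

lemma integral_lower {r x ε : ℝ} (hr : 0 < r) (hr1 : r ≤ 1) (hx : x ∈ Set.Ioo r (2 * r))
    (hε : ε < x - r) :
    (√r)⁻¹ / 2 ≤ ∫ y in {y : ℝ | ε < |x - y|}, bump 0 r y / (x - y) ∂μ01 := by
  have hc : 0 < (√r)⁻¹ := by positivity
  have hS : MeasurableSet {y : ℝ | ε < |x - y|} := by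
    apply measurableSet_lt <;> fun_prop
  have h1 : ∫ y in {y : ℝ | ε < |x - y|}, bump 0 r y / (x - y) ∂μ01
      = ∫ y in {y : ℝ | ε < |x - y|},
          (Set.Ioo 0 r).indicator (fun y => (√r)⁻¹ / (x - y)) y ∂μ01 := by
    apply integral_congr_ae
    apply ae_restrict_of_ae
    have := @indicatorConstLp_coeFn _ _ _ 2 μ01 _ _ (measurableSet_Ioo (a := (0:ℝ)) (b := r))
      (measure_ne_top μ01 _) ((√(r - 0))⁻¹)
    filter_upwards [this] with y hy
    unfold bump
    rw [hy]
    by_cases h : y ∈ Set.Ioo 0 r <;> simp [h]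
  rw [h1, setIntegral_indicator measurableSet_Ioo, Set.inter_eq_right.2]
  · have hint : IntegrableOn (fun y => (√r)⁻¹ / (x - y)) (Set.Ioo 0 r) μ01 := by
      apply Measure.integrableOn_of_bounded (M := (√r)⁻¹ / (x - r)) (measure_ne_top _ _)
      · apply Measurable.aestronglyMeasurable; fun_prop
      · filter_upwards [ae_restrict_mem measurableSet_Ioo] with y hy
        have h2 : 0 < x - r := by linarith [hx.1]
        have h3 : 0 < x - y := by linarith [hx.1, hy.2]
        rw [Real.norm_eq_abs, abs_of_pos (by positivity)]
        gcongr
        exact hy.2.le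
    have h4 : ∫ y in Set.Ioo 0 r, (√r)⁻¹ / (2 * r) ∂μ01 = (√r)⁻¹ / 2 := by
      rw [setIntegral_const, μ01_real_Ioo le_rfl hr.le hr1]
      simp only [smul_eq_mul, sub_zero]
      field_simp
    rw [← h4]
    apply setIntegral_mono_on (integrableOn_const (measure_ne_top _ _)) hint measurableSet_Ioo
    intro y hy
    have h3 : 0 < x - y := by linarith [hx.1, hy.2]
    gcongr
    linarith [hx.2, hy.1]
  · intro y hy
    have h3 : 0 < x - y := by linarith [hx.1, hy.2]
    simp only [Set.mem_setOf_eq, abs_of_pos h3]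
    linarith [hy.2]

lemma inner_lower {T : Lp ℝ 2 μ01 →L[ℝ] Lp ℝ 2 μ01}
    (hT : ∀ f : Lp ℝ 2 μ01, ∀ᵐ x ∂μ01,
          Filter.Tendsto (fun ε : ℝ => ∫ y in {y : ℝ | ε < |x - y|}, f y / (x - y) ∂μ01)
            (nhdsWithin 0 (Set.Ioi 0)) (nhds (T f x)))
    {r : ℝ} (hr : 0 < r) (hr1 : 2 * r ≤ 1) :
    1 / 2 ≤ inner ℝ (bump r (2 * r)) (T (bump 0 r)) := by
  have hs : 0 < √r := Real.sqrt_pos.2 hr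
  have hlow : ∀ᵐ x ∂μ01, x ∈ Set.Ioo r (2 * r) → (√r)⁻¹ / 2 ≤ T (bump 0 r) x := by
    filter_upwards [hT (bump 0 r)] with x hx hxr
    refine ge_of_tendsto hx ?_
    have : Set.Iio (x - r) ∈ nhds (0 : ℝ) := Iio_mem_nhds (by linarith [hxr.1])
    filter_upwards [mem_nhdsWithin_of_mem_nhds this] with ε hε
    exact integral_lower hr (by linarith) hxr hε
  have hI : (√r)⁻¹ / 2 * r ≤ ∫ x in Set.Ioo r (2 * r), T (bump 0 r) x ∂μ01 := by
    have h4 : ∫ y in Set.Ioo r (2 * r), (√r)⁻¹ / 2 ∂μ01 = (√r)⁻¹ / 2 * r := by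
      rw [setIntegral_const, μ01_real_Ioo hr.le (by linarith) hr1]
      simp only [smul_eq_mul]
      ring
    rw [← h4]
    exact setIntegral_mono_on_ae (integrableOn_const (measure_ne_top _ _))
      (integrableOn_Lp_of_measure_ne_top _ fact_one_le_two_ennreal.elim (measure_ne_top _ _))
      measurableSet_Ioo hlow
  rw [bump, L2.inner_indicatorConstLp_eq_inner_setIntegral]
  have e : 2 * r - r = r := by ring
  simp only [e, real_inner_eq_re_inner, RCLike.inner_apply, conj_trivial, RCLike.re_to_real]
  calc (1:ℝ) / 2 = ((√r)⁻¹ / 2 * r) * (√r)⁻¹ := by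
        field_simp
        rw [Real.sq_sqrt hr.le]
    _ ≤ _ := by gcongr

/-- The Cauchy transform of `H¹` on the segment `[0,1]` (the Hilbert transform
restricted to `[0,1]`) is not a compact operator on `L²([0,1])`: there is no compact
continuous linear operator `T` on `L²([0,1])` such that for every `f` and a.e. `x`,
`T f x = lim_{ε→0⁺} ∫_{y ∈ [0,1], |x-y| > ε} f(y)/(x-y) dy`. -/
theorem stmt4 :
    ¬ ∃ T : Lp ℝ 2 μ01 →L[ℝ] Lp ℝ 2 μ01, IsCompactOperator (⇑T) ∧
        ∀ f : Lp ℝ 2 μ01, ∀ᵐ x ∂μ01,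
          Filter.Tendsto (fun ε : ℝ => ∫ y in {y : ℝ | ε < |x - y|}, f y / (x - y) ∂μ01)
            (nhdsWithin 0 (Set.Ioi 0)) (nhds (T f x)) := by
  rintro ⟨T, hc, hT⟩
  obtain ⟨r, hrdef⟩ : ∃ r : ℕ → ℝ, ∀ k, r k = (1 / 2 : ℝ) ^ (k + 1) := ⟨_, fun _ => rfl⟩
  have hr : ∀ k, 0 < r k := fun k => by rw [hrdef]; positivity
  have hr2 : ∀ k, 2 * r k = (1 / 2 : ℝ) ^ k := fun k => by rw [hrdef, pow_succ]; ring
  have hr1 : ∀ k, 2 * r k ≤ 1 := fun k => by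
    rw [hr2]; exact pow_le_one₀ (by norm_num) (by norm_num)
  have hlt : ∀ i j, i < j → 2 * r j ≤ r i := fun i j hij => by
    rw [hr2, hrdef]
    exact pow_le_pow_of_le_one (by norm_num) (by norm_num) hij
  have hnorm : ∀ k, ‖bump (r k) (2 * r k)‖ = 1 := fun k =>
    norm_bump (hr k).le (by linarith [hr k]) (hr1 k)
  have hon : Orthonormal ℝ (fun k => bump (r k) (2 * r k)) := by
    refine ⟨hnorm, ?_⟩
    intro i j hij
    rcases lt_or_gt_of_ne hij with h | h
    · rw [real_inner_comm]
      exact inner_bump_disjoint (hlt i j h)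
    · exact inner_bump_disjoint (hlt j i h)
  obtain ⟨K, hK, hKs⟩ := IsCompactOperator.image_closedBall_subset_compact
    (f := (T : Lp ℝ 2 μ01 →ₗ[ℝ] Lp ℝ 2 μ01)) hc 1
  have hmem : ∀ k, T (bump 0 (r k)) ∈ K := fun k => by
    apply hKs
    refine ⟨_, ?_, rfl⟩
    rw [mem_closedBall_zero_iff, norm_bump le_rfl (hr k) (by linarith [hr k, hr1 k])]
  obtain ⟨g, -, φ, hφ, hlim⟩ := hK.tendsto_subseq hmem
  have h0 : Filter.Tendsto (fun k => ‖inner ℝ (bump (r k) (2 * r k)) g‖ ^ 2) Filter.atTop (nhds 0) :=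
    (hon.inner_products_summable g).tendsto_atTop_zero
  have h1 := (h0.comp hφ.tendsto_atTop).eventually (gt_mem_nhds (show (0:ℝ) < 1 / 16 by norm_num))
  have h2 := (Metric.tendsto_nhds.1 hlim) (1 / 4) (by norm_num)
  obtain ⟨k, hk1, hk2⟩ := (h1.and h2).exists
  simp only [Function.comp] at hk1 hk2
  have h3 := inner_lower hT (hr (φ k)) (hr1 (φ k))
  have h4 : ‖inner ℝ (bump (r (φ k)) (2 * r (φ k))) g‖ < 1 / 4 := by
    apply lt_of_pow_lt_pow_left₀ 2 (by norm_num)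
    linarith
  have h5 := real_inner_le_norm (bump (r (φ k)) (2 * r (φ k))) (T (bump 0 (r (φ k))) - g)
  rw [hnorm, one_mul, inner_sub_right, ← dist_eq_norm] at h5
  have h6 := (le_abs_self _).trans_lt h4
  linarith
end
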